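/- For every prime power q, the number of strong realizations of the hyperfiguration h_4 in P^3(F_q) is A_{h_4}(4,q) = |PGL_4(F_q)|. -/

import Mathlib

open scoped LinearAlgebra.Projectivization

/-- Three points of `ℙ³(F_q)` are collinear if vector representatives of them span a
subspace of `F_q^4` of dimension at most 2. -/
def Collinear3 (F : Type) [Field F] (x y z : ℙ F (Fin 4 → F)) : Prop :=
  Module.finrank F ↥(x.submodule ⊔ y.submodule ⊔ z.submodule) ≤ 2

/-- Four points of `ℙ³(F_q)` are coplanar if vector representatives of them span a
subspace of `F_q^4` of dimension at most 3. -/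
def Coplanar4 (F : Type) [Field F] (x y z w : ℙ F (Fin 4 → F)) : Prop :=
  Module.finrank F ↥(x.submodule ⊔ y.submodule ⊔ z.submodule ⊔ w.submodule) ≤ 3

/-- A strong realization in `ℙ³(F_q)` of a configuration on points `{0,…,6}` given by a
list of planes and a list of lines: an injective map `σ` such that a triple of image points
is collinear iff its index set is contained in a listed line, and four image points are
coplanar iff their index set is contained in a listed plane. -/
def IsConfigReal (F : Type) [Field F] (planes lines : Finset (Finset (Fin 7)))
    (σ : Fin 7 → ℙ F (Fin 4 → F)) : Prop :=
  Function.Injective σ ∧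
    (∀ a b c : Fin 7, a ≠ b → a ≠ c → b ≠ c →
      (Collinear3 F (σ a) (σ b) (σ c) ↔ ∃ l ∈ lines, ({a, b, c} : Finset (Fin 7)) ⊆ l)) ∧
    (∀ a b c d : Fin 7, a ≠ b → a ≠ c → a ≠ d → b ≠ c → b ≠ d → c ≠ d →
      (Coplanar4 F (σ a) (σ b) (σ c) (σ d) ↔
        ∃ h ∈ planes, ({a, b, c, d} : Finset (Fin 7)) ⊆ h))

/-- Planes of the hyperfiguration `h₁`. -/
def h1planes : Finset (Finset (Fin 7)) :=
  {{0, 1, 2, 3}, {0, 1, 4, 5}, {0, 2, 4, 6}, {1, 2, 5, 6}, {1, 3, 4, 6}, {2, 3, 4, 5}}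

/-- Planes of the hyperfiguration `h₂` (the complement of the Fano plane). -/
def h2planes : Finset (Finset (Fin 7)) :=
  {{0, 1, 2, 3}, {0, 1, 4, 5}, {0, 2, 4, 6}, {0, 3, 5, 6}, {1, 2, 5, 6}, {1, 3, 4, 6},
    {2, 3, 4, 5}}

/-- Planes of the hyperfiguration `h₃`. -/
def h3planes : Finset (Finset (Fin 7)) :=
  {{0, 1, 2, 3}, {0, 1, 2, 4}, {0, 1, 2, 5}, {0, 1, 2, 6}, {0, 3, 4, 5}, {1, 3, 4, 6},
    {2, 3, 5, 6}}

/-- Lines of the hyperfiguration `h₃`. -/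
def h3lines : Finset (Finset (Fin 7)) := {{0, 1, 2}}

/-- Planes of the hyperfiguration `h₅`. -/
def h5planes : Finset (Finset (Fin 7)) :=
  {{0, 1, 2, 3, 4}, {0, 1, 2, 3, 5}, {0, 1, 2, 3, 6}, {0, 4, 5, 6}, {1, 4, 5, 6},
    {2, 4, 5, 6}, {3, 4, 5, 6}}

/-- Lines of the hyperfiguration `h₅`. -/
def h5lines : Finset (Finset (Fin 7)) := {{0, 1, 2, 3}, {4, 5, 6}}

/-- Planes of the hyperfiguration `h₄`. -/
def h4planes : Finset (Finset (Fin 7)) :=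
  {{0, 1, 2, 3, 4}, {0, 1, 2, 5}, {0, 1, 2, 6}, {0, 3, 4, 5}, {0, 3, 4, 6}, {1, 3, 5, 6},
    {2, 4, 5, 6}}

/-- Lines of the hyperfiguration `h₄`. -/
def h4lines : Finset (Finset (Fin 7)) := {{0, 1, 2}, {0, 3, 4}}

/-!
In a realization of `h₄` no four of the points `0, 1, 4, 5, 6` are coplanar, so they form a
projective frame. The two remaining points are then forced: `2` is the intersection of the line
`01` with the plane `456`, and `3` is the intersection of the line `04` with the plane `156`. As
`PGL₄` acts simply transitively on projective frames and preserves realizations, it acts simply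
transitively on the realizations, and there is one over every field.
-/

open Projectivization Module
open scoped MatrixGroups

section ProjectiveFrame

variable {K V ι : Type*}

theorem independent_mk_iff_linearIndependent [DivisionRing K] [AddCommGroup V] [Module K V]
    {v : ι → V} (hv : ∀ i, v i ≠ 0) :
    Independent (fun i ↦ Projectivization.mk K (v i) (hv i)) ↔ LinearIndependent K v := by
  simp only [independent_iff_iSupIndep, submodule_mk, iSupIndep_iff_linearIndependent_of_ne_zero hv]

theorem independent_iff_card_le_finrank_iSup_submodule [DivisionRing K] [AddCommGroup V]
    [Module K V] [Fintype ι] {p : ι → ℙ K V} :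
    Independent p ↔ Fintype.card ι ≤ finrank K ↥(⨆ i, (p i).submodule) := by
  have hspan : ⨆ i, (p i).submodule = Submodule.span K (Set.range (Projectivization.rep ∘ p)) := by
    simp [Submodule.span_range_eq_iSup, submodule_eq]
  rw [hspan, independent_iff, linearIndependent_iff_card_le_finrank_span, Set.finrank]

theorem submodule_smul {G : Type*} [DivisionRing K] [AddCommGroup V] [Module K V] [Group G]
    [DistribMulAction G V] [SMulCommClass G K V] (g : G) (x : ℙ K V) :
    (g • x).submodule = x.submodule.map (DistribMulAction.toLinearEquiv K V g).toLinearMap := by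
  induction x with | h v hv =>
  simp [smul_mk, submodule_mk, Submodule.map_span]

theorem exists_linearEquiv_forall_submodule_smul [Field K] [Fintype ι] [DecidableEq ι]
    (g : PGL(ι, K)) :
    ∃ e : (ι → K) ≃ₗ[K] (ι → K), ∀ x : ℙ K (ι → K),
      (g • x).submodule = x.submodule.map e.toLinearMap := by
  obtain ⟨g, rfl⟩ := Matrix.ProjGenLinGroup.mk_surjective g
  exact ⟨_, submodule_smul g⟩

/-- A projective frame, in the form of a family `p` of coordinate vertices together with a unit
point `u`: the family `p` is independent, and stays so when any of its points is replaced by `u`. -/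
structure IsProjectiveFrame [DivisionRing K] [AddCommGroup V] [Module K V] [DecidableEq ι]
    (p : ι → ℙ K V) (u : ℙ K V) : Prop where
  independent : Independent p
  independent_update (i : ι) : Independent (Function.update p i u)

theorem repr_ne_zero_of_linearIndependent_update [Ring K] [Nontrivial K] [AddCommGroup V]
    [Module K V] [DecidableEq ι] (b : Basis ι K V) {w : V} {i : ι}
    (h : LinearIndependent K (Function.update b i w)) : b.repr w i ≠ 0 := by
  intro hi
  have hw : w ∈ Submodule.span K (b '' {i}ᶜ) := by
    rw [b.mem_span_image, Set.subset_compl_singleton_iff]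
    simpa using hi
  have himage : Function.update b i w '' {i}ᶜ = b '' {i}ᶜ :=
    Set.image_congr fun j hj ↦ Function.update_of_ne hj w b
  exact h.notMem_span_image (s := {i}ᶜ) (x := i) (by simp) (by simpa [himage] using hw)

theorem IsProjectiveFrame.exists_basis [DivisionRing K] [AddCommGroup V] [Module K V]
    [Fintype ι] [DecidableEq ι] [Nonempty ι] {p : ι → ℙ K V} {u : ℙ K V} (h : IsProjectiveFrame p u)
    (hcard : Fintype.card ι = finrank K V) :
    ∃ b : Basis ι K V, (∀ i, p i = .mk K (b i) (b.ne_zero i)) ∧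
      ∃ hu : ∑ i, b i ≠ 0, u = .mk K (∑ i, b i) hu := by
  let b := basisOfLinearIndependentOfCardEqFinrank (independent_iff.1 h.independent) hcard
  have hb (i : ι) : b i = (p i).rep := by simp [b]
  have hc (i : ι) : b.repr u.rep i ≠ 0 := by
    apply repr_ne_zero_of_linearIndependent_update
    rw [show ⇑b = Projectivization.rep ∘ p from funext hb, ← Function.comp_update]
    exact independent_iff.1 (h.independent_update i)
  -- Rescaling the vertices by the coordinates of `u` turns `u` into the unit point.
  let b' := b.isUnitSMul fun i ↦ (hc i).isUnit
  have hb' (i : ι) : b' i = b.repr u.rep i • (p i).rep := by simp [b', Basis.isUnitSMul_apply, hb]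
  have hsum : ∑ i, b' i = u.rep := by simp [hb', ← hb, b.sum_repr]
  refine ⟨b', fun i ↦ ?_, hsum ▸ u.rep_nonzero, ?_⟩
  · rw [← (p i).mk_rep, eq_comm, mk_eq_mk_iff']
    exact ⟨_, (hb' i).symm⟩
  · simp [hsum]

/-- The `i`-th vertex `[0 : ⋯ : 1 : ⋯ : 0]` of the standard projective frame. -/
def stdVertex (K : Type*) [DivisionRing K] [DecidableEq ι] (i : ι) : ℙ K (ι → K) :=
  .mk K (Pi.single i 1) (by simp)

/-- The unit point `[1 : ⋯ : 1]` of the standard projective frame. -/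
def stdUnitPoint (K ι : Type*) [DivisionRing K] [Nonempty ι] : ℙ K (ι → K) :=
  .mk K 1 one_ne_zero

variable [Field K] [Fintype ι] [DecidableEq ι] [Nonempty ι]

theorem IsProjectiveFrame.exists_smul_eq {p : ι → ℙ K (ι → K)} {u : ℙ K (ι → K)}
    (h : IsProjectiveFrame p u) :
    ∃ g : PGL(ι, K), (∀ i, g • stdVertex K i = p i) ∧ g • stdUnitPoint K ι = u := by
  obtain ⟨b, hp, hu, rfl⟩ := h.exists_basis (by simp)
  obtain ⟨g, hg⟩ : IsUnit (Matrix.of fun i j ↦ b j i) :=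
    Matrix.linearIndependent_cols_iff_isUnit.1 b.linearIndependent
  have smul_eq (v : ι → K) : g • v = (Matrix.of fun i j ↦ b j i).mulVec v := by rw [← hg]; rfl
  refine ⟨.mk g, fun i ↦ ?_, ?_⟩
  · rw [hp, stdVertex, PGL.mk_smul_mk]
    congr 1
    rw [smul_eq, Matrix.mulVec_single_one]
    rfl
  · rw [stdUnitPoint, PGL.mk_smul_mk]
    congr 1
    ext i
    simp [smul_eq, Matrix.mulVec, dotProduct]

theorem eq_one_of_smul_stdVertex_of_smul_stdUnitPoint {g : Matrix.ProjGenLinGroup ι K}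
    (hvertex : ∀ i : ι, g • stdVertex K i = stdVertex K i)
    (hunit : g • stdUnitPoint K ι = stdUnitPoint K ι) : g = 1 := by
  obtain ⟨g, rfl⟩ := Matrix.ProjGenLinGroup.mk_surjective g
  simp only [stdVertex, stdUnitPoint, PGL.mk_smul_mk, mk_eq_mk_iff'] at hvertex hunit
  choose a ha using hvertex
  obtain ⟨c, hc⟩ := hunit
  have smul_eq (v : ι → K) : g • v = g.1.mulVec v := rfl
  have hdiag : g.1 = Matrix.diagonal a := by
    ext i j
    have hij : (a j • Pi.single j 1 : ι → K) i = g.1 i j := by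
      rw [ha j, smul_eq, Matrix.mulVec_single_one, Matrix.col_apply]
    rw [← hij, Matrix.diagonal_apply, Pi.smul_apply, Pi.single_apply, smul_eq_mul, mul_ite,
      mul_one, mul_zero]
    split_ifs with h
    · rw [h]
    · rfl
  have hconst (i : ι) : a i = c := by
    have hi := congrFun hc i
    rw [smul_eq, hdiag, Matrix.mulVec_diagonal] at hi
    simpa using hi.symm
  rw [Matrix.ProjGenLinGroup.mk_eq_one,
    Matrix.GeneralLinearGroup.mem_center_iff_val_mem_range_scalar]
  exact ⟨c, by rw [hdiag, funext hconst]; rfl⟩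

theorem IsProjectiveFrame.existsUnique_smul_eq {p : ι → ℙ K (ι → K)} {u : ℙ K (ι → K)}
    (h : IsProjectiveFrame p u) :
    ∃! g : PGL(ι, K), (∀ i, g • stdVertex K i = p i) ∧ g • stdUnitPoint K ι = u := by
  obtain ⟨g, hp, hu⟩ := h.exists_smul_eq
  refine ⟨g, ⟨hp, hu⟩, fun g' ⟨hp', hu'⟩ ↦ ?_⟩
  refine inv_mul_eq_one.1 (eq_one_of_smul_stdVertex_of_smul_stdUnitPoint (fun i ↦ ?_) ?_)
  · rw [mul_smul, inv_smul_eq_iff, hp, hp']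
  · rw [mul_smul, inv_smul_eq_iff, hu, hu']

theorem card_projGenLinGroup [Finite K] :
    Nat.card PGL(ι, K) = Nat.card (GL ι K) / (Nat.card K - 1) := by
  have hinj : Function.Injective (Matrix.GeneralLinearGroup.scalar ι (R := K)) :=
    Units.map_injective fun a b h ↦ Matrix.scalar_inj.1 h
  have hcenter : Nat.card (Subgroup.center (GL ι K)) = Nat.card K - 1 := by
    rw [Matrix.GeneralLinearGroup.center_eq_range_scalar, ← Nat.card_units]
    exact Nat.card_range_of_injective hinj
  have hpos : 0 < Nat.card (Subgroup.center (GL ι K)) := Nat.card_pos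
  rw [← hcenter, Subgroup.card_eq_card_quotient_mul_card_subgroup (Subgroup.center (GL ι K)),
    Nat.mul_div_cancel _ hpos]
  rfl

end ProjectiveFrame

section SpanOfPoints

variable {K V : Type*} [DivisionRing K] [AddCommGroup V] [Module K V]

theorem finrank_sup_submodule_le (W : Submodule K V) [FiniteDimensional K W] (x : ℙ K V) :
    finrank K ↥(W ⊔ x.submodule) ≤ finrank K W + 1 := by
  simpa only [finrank_submodule] using Submodule.finrank_add_le_finrank_add_finrank W x.submodule

theorem finrank_submodule_sup_submodule_le (x y : ℙ K V) :
    finrank K ↥(x.submodule ⊔ y.submodule) ≤ 2 := by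
  simpa only [finrank_submodule] using finrank_sup_submodule_le x.submodule y

theorem finrank_submodule_sup_submodule_sup_submodule_le (x y z : ℙ K V) :
    finrank K ↥(x.submodule ⊔ y.submodule ⊔ z.submodule) ≤ 3 :=
  (finrank_sup_submodule_le _ z).trans (Nat.succ_le_succ (finrank_submodule_sup_submodule_le x y))

theorem submodule_le_of_finrank_sup_le {W : Submodule K V} [FiniteDimensional K W] {x : ℙ K V}
    (h : finrank K ↥(W ⊔ x.submodule) ≤ finrank K W) : x.submodule ≤ W :=
  left_eq_sup.1 (Submodule.eq_of_le_of_finrank_le le_sup_left h)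

theorem submodule_le_iff_eq {x y : ℙ K V} : x.submodule ≤ y.submodule ↔ x = y := by
  refine ⟨fun h ↦ submodule_injective ?_, fun h ↦ h ▸ le_rfl⟩
  exact Submodule.eq_of_le_of_finrank_eq h (by simp only [finrank_submodule])

theorem two_le_finrank_submodule_sup_submodule {x y : ℙ K V} (h : x ≠ y) :
    2 ≤ finrank K ↥(x.submodule ⊔ y.submodule) := by
  contrapose! h
  rw [eq_comm, ← submodule_le_iff_eq]
  exact submodule_le_of_finrank_sup_le (by rw [finrank_submodule]; lia)

end SpanOfPoints

section Incidence

variable {F : Type} [Field F]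

theorem collinear3_smul_iff (g : PGL(Fin 4, F)) {x y z : ℙ F (Fin 4 → F)} :
    Collinear3 F (g • x) (g • y) (g • z) ↔ Collinear3 F x y z := by
  obtain ⟨e, he⟩ := exists_linearEquiv_forall_submodule_smul g
  rw [Collinear3, he, he, he, ← Submodule.map_sup, ← Submodule.map_sup,
    LinearEquiv.finrank_map_eq, Collinear3]

theorem coplanar4_smul_iff (g : PGL(Fin 4, F)) {x y z w : ℙ F (Fin 4 → F)} :
    Coplanar4 F (g • x) (g • y) (g • z) (g • w) ↔ Coplanar4 F x y z w := by
  obtain ⟨e, he⟩ := exists_linearEquiv_forall_submodule_smul g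
  rw [Coplanar4, he, he, he, he, ← Submodule.map_sup, ← Submodule.map_sup, ← Submodule.map_sup,
    LinearEquiv.finrank_map_eq, Coplanar4]

theorem IsConfigReal.smul {planes lines : Finset (Finset (Fin 7))} {σ : Fin 7 → ℙ F (Fin 4 → F)}
    (h : IsConfigReal F planes lines σ) (g : PGL(Fin 4, F)) :
    IsConfigReal F planes lines (g • σ) := by
  obtain ⟨hinj, hlines, hplanes⟩ := h
  refine ⟨(MulAction.injective g).comp hinj, fun a b c hab hac hbc ↦ ?_,
    fun a b c d hab hac had hbc hbd hcd ↦ ?_⟩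
  · rw [← hlines a b c hab hac hbc]
    exact collinear3_smul_iff g
  · rw [← hplanes a b c d hab hac had hbc hbd hcd]
    exact coplanar4_smul_iff g

theorem coplanar4_iff_not_independent {p : Fin 4 → ℙ F (Fin 4 → F)} :
    Coplanar4 F (p 0) (p 1) (p 2) (p 3) ↔ ¬ Independent p := by
  have hsup : ⨆ i, (p i).submodule =
      (p 0).submodule ⊔ (p 1).submodule ⊔ (p 2).submodule ⊔ (p 3).submodule := by
    apply le_antisymm
    · exact iSup_le fun i ↦ by fin_cases i <;> simp [le_sup_of_le_left]
    · simp only [sup_le_iff, le_iSup (fun i ↦ (p i).submodule), and_self]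
  rw [independent_iff_card_le_finrank_iSup_submodule, hsup, Fintype.card_fin, not_le,
    Nat.lt_succ_iff, Coplanar4]

theorem coplanar4_mk_iff_det_eq_zero {A : Matrix (Fin 4) (Fin 4) F} (hA : ∀ i, A i ≠ 0) :
    Coplanar4 F (.mk F (A 0) (hA 0)) (.mk F (A 1) (hA 1)) (.mk F (A 2) (hA 2))
      (.mk F (A 3) (hA 3)) ↔ A.det = 0 := by
  rw [coplanar4_iff_not_independent (p := fun i ↦ .mk F (A i) (hA i)),
    independent_mk_iff_linearIndependent hA]
  change ¬ LinearIndependent F A.row ↔ _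
  rw [Matrix.linearIndependent_rows_iff_isUnit, Matrix.isUnit_iff_isUnit_det, isUnit_iff_ne_zero,
    not_not]

theorem collinear3_self_left (x y : ℙ F (Fin 4 → F)) : Collinear3 F x x y := by
  rw [Collinear3, sup_idem]
  exact finrank_submodule_sup_submodule_le x y

theorem coplanar4_of_submodule_le {x y z w : ℙ F (Fin 4 → F)}
    (h : w.submodule ≤ x.submodule ⊔ y.submodule ⊔ z.submodule) : Coplanar4 F x y z w := by
  rw [Coplanar4, sup_eq_left.2 h]
  exact finrank_submodule_sup_submodule_sup_submodule_le x y z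

theorem sup_submodule_eq_top_of_not_coplanar4 {x y z w : ℙ F (Fin 4 → F)}
    (h : ¬ Coplanar4 F x y z w) :
    x.submodule ⊔ y.submodule ⊔ z.submodule ⊔ w.submodule = ⊤ := by
  refine Submodule.eq_top_of_finrank_eq (le_antisymm (Submodule.finrank_le _) ?_)
  rw [finrank_fin_fun]
  exact not_le.1 h

theorem Collinear3.coplanar4 {x y z : ℙ F (Fin 4 → F)} (h : Collinear3 F x y z)
    (w : ℙ F (Fin 4 → F)) : Coplanar4 F x y z w :=
  (finrank_sup_submodule_le _ w).trans (Nat.succ_le_succ h)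

theorem Collinear3.submodule_le {x y z : ℙ F (Fin 4 → F)} (h : Collinear3 F x y z) (hxy : x ≠ y) :
    z.submodule ≤ x.submodule ⊔ y.submodule :=
  submodule_le_of_finrank_sup_le (h.trans (two_le_finrank_submodule_sup_submodule hxy))

theorem Coplanar4.submodule_le {x y z w : ℙ F (Fin 4 → F)} (h : Coplanar4 F x y z w)
    (hxyz : ¬ Collinear3 F x y z) : w.submodule ≤ x.submodule ⊔ y.submodule ⊔ z.submodule :=
  submodule_le_of_finrank_sup_le (h.trans (not_le.1 hxyz))

theorem collinear3_iff_forall_coplanar4 {ι : Type*} {p : ι → ℙ F (Fin 4 → F)}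
    (hp : ⨆ i, (p i).submodule = ⊤) {x y z : ℙ F (Fin 4 → F)} :
    Collinear3 F x y z ↔ ∀ i, Coplanar4 F x y z (p i) := by
  refine ⟨fun h i ↦ h.coplanar4 (p i), fun h ↦ ?_⟩
  by_contra hxyz
  have htop : ⊤ ≤ x.submodule ⊔ y.submodule ⊔ z.submodule :=
    hp ▸ iSup_le fun i ↦ (h i).submodule_le hxyz
  have hfinrank := finrank_submodule_sup_submodule_sup_submodule_le x y z
  rw [top_le_iff.1 htop, finrank_top, finrank_fin_fun] at hfinrank
  exact absurd hfinrank (by decide)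

-- The line `ab` is not contained in the plane `cde`, so it meets it in at most one point.
theorem eq_of_collinear3_of_coplanar4 {a b c d e x y : ℙ F (Fin 4 → F)} (hab : a ≠ b)
    (ha : ¬ Coplanar4 F c d e a) (hx : Collinear3 F a b x) (hx' : Coplanar4 F c d e x)
    (hy : Collinear3 F a b y) (hy' : Coplanar4 F c d e y) : x = y := by
  have hcde : ¬ Collinear3 F c d e := fun h ↦ ha (h.coplanar4 a)
  set L := a.submodule ⊔ b.submodule
  set P := c.submodule ⊔ d.submodule ⊔ e.submodule
  have haP : ¬ a.submodule ≤ P := fun h ↦ ha (coplanar4_of_submodule_le h)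
  have hfinrank : finrank F ↥(L ⊓ P) ≤ 1 := by
    have hlt : L ⊓ P < L := inf_lt_left.2 fun h ↦ haP (le_sup_left.trans h)
    exact Nat.le_of_lt_succ ((Submodule.finrank_lt_finrank_of_lt hlt).trans_le
      (finrank_submodule_sup_submodule_le a b))
  have eq_meet {z : ℙ F (Fin 4 → F)} (hz : Collinear3 F a b z) (hz' : Coplanar4 F c d e z) :
      z.submodule = L ⊓ P :=
    Submodule.eq_of_le_of_finrank_le (le_inf (hz.submodule_le hab) (hz'.submodule_le hcde))
      (by rwa [finrank_submodule])
  exact submodule_injective ((eq_meet hx hx').trans (eq_meet hy hy').symm)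

-- The points span the space, so three of them are collinear iff coplanar with every other point.
theorem isConfigReal_of_coplanar4_iff {planes lines : Finset (Finset (Fin 7))}
    {σ : Fin 7 → ℙ F (Fin 4 → F)}
    (hlines : ∀ a b c : Fin 7, a ≠ b → a ≠ c → b ≠ c → ((∃ l ∈ lines, {a, b, c} ⊆ l) ↔
      ∀ d, a ≠ d → b ≠ d → c ≠ d → ∃ h ∈ planes, {a, b, c, d} ⊆ h))
    (hpair : ∀ a b : Fin 7, a ≠ b → ∃ c d, a ≠ c ∧ a ≠ d ∧ b ≠ c ∧ b ≠ d ∧ c ≠ d ∧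
      ¬ ∃ h ∈ planes, {a, b, c, d} ⊆ h)
    (hσ : ∀ a b c d : Fin 7, a ≠ b → a ≠ c → a ≠ d → b ≠ c → b ≠ d → c ≠ d →
      (Coplanar4 F (σ a) (σ b) (σ c) (σ d) ↔ ∃ h ∈ planes, {a, b, c, d} ⊆ h)) :
    IsConfigReal F planes lines σ := by
  have exists_not_coplanar4 {a b : Fin 7} (hab : a ≠ b) :
      ∃ c d, ¬ Coplanar4 F (σ a) (σ b) (σ c) (σ d) := by
    obtain ⟨c, d, hac, had, hbc, hbd, hcd, hplane⟩ := hpair a b hab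
    exact ⟨c, d, mt (hσ a b c d hab hac had hbc hbd hcd).1 hplane⟩
  have hspan : ⨆ i, (σ i).submodule = ⊤ := by
    obtain ⟨c, d, hcd⟩ := exists_not_coplanar4 (zero_ne_one' (Fin 7))
    have hle (i : Fin 7) := le_iSup (fun i ↦ (σ i).submodule) i
    rw [← top_le_iff, ← sup_submodule_eq_top_of_not_coplanar4 hcd]
    exact sup_le (sup_le (sup_le (hle 0) (hle 1)) (hle c)) (hle d)
  refine ⟨fun a b hab ↦ ?_, fun a b c hab hac hbc ↦ ?_, hσ⟩
  · by_contra hne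
    obtain ⟨c, d, hcd⟩ := exists_not_coplanar4 hne
    rw [hab] at hcd
    exact hcd ((collinear3_self_left _ _).coplanar4 _)
  · rw [collinear3_iff_forall_coplanar4 hspan, hlines a b c hab hac hbc]
    refine forall_congr' fun d ↦ ⟨fun h had hbd hcd ↦ ?_, fun h ↦ ?_⟩
    · exact (hσ a b c d hab hac had hbc hbd hcd).1 h
    · by_cases hd : d ∈ ({a, b, c} : Finset (Fin 7))
      · refine coplanar4_of_submodule_le ?_
        simp only [Finset.mem_insert, Finset.mem_singleton] at hd
        rcases hd with rfl | rfl | rfl <;> simp [le_sup_of_le_left]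
      · simp only [Finset.mem_insert, Finset.mem_singleton, not_or, ← ne_eq] at hd
        obtain ⟨had, hbd, hcd⟩ := hd
        exact (hσ a b c d hab hac had.symm hbc hbd.symm hcd.symm).2
          (h had.symm hbd.symm hcd.symm)

end Incidence

section StandardRealization

/-- Integral homogeneous coordinates of a realization of `h₄`, one row for each point. Its
`4 × 4` minors are `0`, `1` and `-1`, so that it is a realization in every characteristic. -/
def h4Matrix : Matrix (Fin 7) (Fin 4) ℤ :=
  !![1, 0, 0, 0;
     0, 1, 0, 0;
     1, 1, 0, 0;
     1, 0, 1, 0;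
     0, 0, 1, 0;
     0, 0, 0, 1;
     1, 1, 1, 1]

theorem natAbs_det_h4Matrix_submatrix (a b c d : Fin 7)
    (h : a ≠ b ∧ a ≠ c ∧ a ≠ d ∧ b ≠ c ∧ b ≠ d ∧ c ≠ d) :
    (h4Matrix.submatrix ![a, b, c, d] id).det.natAbs =
      if ∃ h ∈ h4planes, {a, b, c, d} ⊆ h then 0 else 1 := by
  -- Laplace expansion spares the kernel the enumeration of permutations defining `Matrix.det`.
  simp only [Matrix.det_succ_row_zero (n := 3), Matrix.det_fin_three, Fin.sum_univ_four,
    Finset.insert_subset_iff, Finset.singleton_subset_iff]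
  revert a b c d
  decide +kernel

theorem exists_mem_h4lines_iff : ∀ a b c : Fin 7, a ≠ b → a ≠ c → b ≠ c →
    ((∃ l ∈ h4lines, {a, b, c} ⊆ l) ↔
      ∀ d, a ≠ d → b ≠ d → c ≠ d → ∃ h ∈ h4planes, {a, b, c, d} ⊆ h) := by
  decide +kernel

theorem exists_not_exists_mem_h4planes : ∀ a b : Fin 7, a ≠ b →
    ∃ c d, a ≠ c ∧ a ≠ d ∧ b ≠ c ∧ b ≠ d ∧ c ≠ d ∧
      ¬ ∃ h ∈ h4planes, {a, b, c, d} ⊆ h := by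
  decide +kernel

variable (F : Type) [Field F]

theorem map_h4Matrix_ne_zero (i : Fin 7) : h4Matrix.map (Int.cast : ℤ → F) i ≠ 0 := by
  obtain ⟨j, hj⟩ : ∃ j, h4Matrix i j = 1 :=
    ⟨![0, 1, 0, 0, 2, 3, 0] i, by fin_cases i <;> rfl⟩
  exact fun h ↦ by simpa [hj] using congrFun h j

/-- The realization of `h₄` in `ℙ³(F)` with homogeneous coordinates `h4Matrix`. -/
def h4Std (i : Fin 7) : ℙ F (Fin 4 → F) :=
  .mk F (h4Matrix.map Int.cast i) (map_h4Matrix_ne_zero F i)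

theorem isConfigReal_h4Std : IsConfigReal F h4planes h4lines (h4Std F) := by
  refine isConfigReal_of_coplanar4_iff exists_mem_h4lines_iff exists_not_exists_mem_h4planes
    fun a b c d hab hac had hbc hbd hcd ↦ ?_
  have hminor := natAbs_det_h4Matrix_submatrix a b c d ⟨hab, hac, had, hbc, hbd, hcd⟩
  set A := h4Matrix.submatrix ![a, b, c, d] id
  have hdet : (A.map (Int.cast : ℤ → F)).det = A.det := (Int.cast_det A).symm
  have hcoplanar : Coplanar4 F (h4Std F a) (h4Std F b) (h4Std F c) (h4Std F d) ↔
      (A.map (Int.cast : ℤ → F)).det = 0 :=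
    coplanar4_mk_iff_det_eq_zero (A := A.map Int.cast) fun i ↦ map_h4Matrix_ne_zero F _
  rw [hcoplanar, hdet]
  split_ifs at hminor with hplane
  · simp [Int.natAbs_eq_zero.1 hminor, hplane]
  · rcases Int.natAbs_eq_iff.1 hminor with h | h <;> simp [h, hplane]

theorem h4Std_apply_vertex (i : Fin 4) : h4Std F (![0, 1, 4, 5] i) = stdVertex F i := by
  unfold h4Std stdVertex
  congr 1
  ext j
  fin_cases i <;> fin_cases j <;> simp [h4Matrix]

theorem h4Std_six : h4Std F 6 = stdUnitPoint F (Fin 4) := by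
  unfold h4Std stdUnitPoint
  congr 1
  ext j
  fin_cases j <;> simp [h4Matrix]

end StandardRealization

section Torsor

variable {F : Type} [Field F] {planes lines : Finset (Finset (Fin 7))}
  {σ τ : Fin 7 → ℙ F (Fin 4 → F)}

theorem IsConfigReal.collinear3_iff (h : IsConfigReal F planes lines σ) {a b c : Fin 7}
    (hnodup : [a, b, c].Nodup) :
    Collinear3 F (σ a) (σ b) (σ c) ↔ ∃ l ∈ lines, {a, b, c} ⊆ l := by
  have hne : (a ≠ b ∧ a ≠ c) ∧ b ≠ c := by simpa using hnodup
  exact h.2.1 a b c hne.1.1 hne.1.2 hne.2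

theorem IsConfigReal.coplanar4_iff (h : IsConfigReal F planes lines σ) {a b c d : Fin 7}
    (hnodup : [a, b, c, d].Nodup) :
    Coplanar4 F (σ a) (σ b) (σ c) (σ d) ↔ ∃ h ∈ planes, {a, b, c, d} ⊆ h := by
  have hne : (a ≠ b ∧ a ≠ c ∧ a ≠ d) ∧ (b ≠ c ∧ b ≠ d) ∧ c ≠ d := by simpa using hnodup
  obtain ⟨⟨hab, hac, had⟩, ⟨hbc, hbd⟩, hcd⟩ := hne
  exact h.2.2 a b c d hab hac had hbc hbd hcd

theorem IsConfigReal.independent_iff (h : IsConfigReal F planes lines σ) {f : Fin 4 → Fin 7}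
    (hf : Function.Injective f) :
    Independent (σ ∘ f) ↔ ¬ ∃ h ∈ planes, Finset.univ.image f ⊆ h := by
  have himage : Finset.univ.image f = {f 0, f 1, f 2, f 3} := by
    simp [Fin.univ_succ, Fin.succ]
  rw [himage, ← h.coplanar4_iff (by simpa using List.nodup_ofFn.2 hf)]
  exact (not_iff_comm.1 (coplanar4_iff_not_independent (p := σ ∘ f)).symm).symm

theorem isProjectiveFrame_of_isConfigReal_h4 (h : IsConfigReal F h4planes h4lines σ) :
    IsProjectiveFrame (σ ∘ ![0, 1, 4, 5]) (σ 6) where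
  independent := (h.independent_iff (by decide)).2 (by decide)
  independent_update i := by
    rw [← Function.comp_update]
    refine (h.independent_iff ?_).2 ?_ <;> revert i <;> decide

theorem IsConfigReal.apply_eq_of_mem_line_of_mem_plane
    (hσ : IsConfigReal F planes lines σ) (hτ : IsConfigReal F planes lines τ) {a b c d e x : Fin 7}
    (hline : [a, b, x].Nodup ∧ ∃ l ∈ lines, {a, b, x} ⊆ l)
    (hplane : [c, d, e, x].Nodup ∧ ∃ h ∈ planes, {c, d, e, x} ⊆ h)
    (hnot : [c, d, e, a].Nodup ∧ ¬ ∃ h ∈ planes, {c, d, e, a} ⊆ h)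
    (heq : Set.EqOn σ τ {a, b, c, d, e}) : σ x = τ x := by
  have hab : a ≠ b := List.ne_of_not_mem_cons (List.nodup_cons.1 hline.1).1
  have ha : σ a = τ a := heq (by simp)
  have hb : σ b = τ b := heq (by simp)
  have hc : σ c = τ c := heq (by simp)
  have hd : σ d = τ d := heq (by simp)
  have he : σ e = τ e := heq (by simp)
  refine eq_of_collinear3_of_coplanar4 (hσ.1.ne hab)
    (mt (hσ.coplanar4_iff hnot.1).1 hnot.2)
    ((hσ.collinear3_iff hline.1).2 hline.2) ((hσ.coplanar4_iff hplane.1).2 hplane.2) ?_ ?_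
  · rw [ha, hb]
    exact (hτ.collinear3_iff hline.1).2 hline.2
  · rw [hc, hd, he]
    exact (hτ.coplanar4_iff hplane.1).2 hplane.2

theorem eq_of_eqOn_of_isConfigReal_h4 (hσ : IsConfigReal F h4planes h4lines σ)
    (hτ : IsConfigReal F h4planes h4lines τ) (h : Set.EqOn σ τ {0, 1, 4, 5, 6}) : σ = τ := by
  have h2 : σ 2 = τ 2 :=
    hσ.apply_eq_of_mem_line_of_mem_plane hτ (a := 0) (b := 1) (c := 4) (d := 5) (e := 6)
      (by decide) (by decide) (by decide) h
  have h3 : σ 3 = τ 3 :=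
    hσ.apply_eq_of_mem_line_of_mem_plane hτ (a := 0) (b := 4) (c := 1) (d := 5) (e := 6)
      (by decide) (by decide) (by decide) (by rwa [Set.insert_comm 4 1])
  ext1 i
  fin_cases i
  exacts [h (by simp), h (by simp), h2, h3, h (by simp), h (by simp), h (by simp)]

theorem existsUnique_smul_h4Std (h : IsConfigReal F h4planes h4lines σ) :
    ∃! g : PGL(Fin 4, F), g • h4Std F = σ := by
  have hframe (g : PGL(Fin 4, F)) : g • h4Std F = σ ↔
      (∀ i, g • stdVertex F i = (σ ∘ ![0, 1, 4, 5]) i) ∧ g • stdUnitPoint F (Fin 4) = σ 6 := by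
    simp only [← h4Std_apply_vertex, ← h4Std_six]
    refine ⟨fun hg ↦ by simp [← hg], fun ⟨hp, hu⟩ ↦ ?_⟩
    refine eq_of_eqOn_of_isConfigReal_h4 ((isConfigReal_h4Std F).smul g) h ?_
    rintro i (rfl | rfl | rfl | rfl | rfl)
    exacts [hp 0, hp 1, hp 2, hp 3, hu]
  simpa only [hframe] using (isProjectiveFrame_of_isConfigReal_h4 h).existsUnique_smul_eq

end Torsor

theorem Ah4_formula_general (F : Type) [Field F] :
    Cardinal.mk {σ : Fin 7 → ℙ F (Fin 4 → F) // IsConfigReal F h4planes h4lines σ} =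
      Cardinal.mk PGL(Fin 4, F) := by
  let orbitMap (g : PGL(Fin 4, F)) : {σ // IsConfigReal F h4planes h4lines σ} :=
    ⟨g • h4Std F, (isConfigReal_h4Std F).smul g⟩
  refine (Cardinal.mk_congr (Equiv.ofBijective orbitMap ?_)).symm
  refine (Function.bijective_iff_existsUnique _).2 fun σ ↦ ?_
  simpa only [orbitMap, Subtype.ext_iff] using existsUnique_smul_h4Std σ.2

/-- `A_{h₄}(4,q) = |PGL₄(F_q)|`. -/
theorem Ah4_formula (F : Type) [Field F] [Fintype F] (q : ℕ) (hq : q = Fintype.card F) :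
    Nat.card {σ : Fin 7 → ℙ F (Fin 4 → F) // IsConfigReal F h4planes h4lines σ} =
      Nat.card (GL (Fin 4) F) / (q - 1) := by
  rw [Nat.card, Ah4_formula_general, ← Nat.card, card_projGenLinGroup, hq,
    Nat.card_eq_fintype_card (α := F)]
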